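/- arXiv:1610.02290 — 4 statements merged into one kernel-verified Lean document; each statement's English description precedes it below -/
import Mathlib

section
/- Let (A, μ, α, β) be a BiHom-associative superalgebra over a field k whose structure maps α and β are bijective. Define on homogeneous elements the supercommutator [x, y] = xy − (−1)^{|x||y|} (α⁻¹(β(y)))(α(β⁻¹(x))), extended bilinearly to all of A. Then (A, [·,·], α, β) is a BiHom-Lie superalgebra. (Theorem 2.6) -/
/-- The supercommutator of a BiHom-(associative) superalgebra with bijective structure
maps `α`, `β`, defined on elements of parities `i`, `j` by
`[x, y] = x·y − (−1)^{|x||y|} (α⁻¹(β(y)))·(α(β⁻¹(x)))`. -/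
noncomputable def superComm {K : Type*} [Field K] {A : Type*} [AddCommGroup A] [Module K A]
    (μ : A →ₗ[K] A →ₗ[K] A) (α β : A ≃ₗ[K] A) (i j : ZMod 2) (x y : A) : A :=
  μ x y - ((-1 : K) ^ (i.val * j.val)) • μ (α.symm (β y)) (α (β.symm x))

/-!
The twists in the commutator are chosen so that `[β x, α y] = β x · α y − ε (β y · α x)`, and
BiHom-associativity rewrites `α⁻¹β (β y · α z) · αβ⁻¹ (β² x)` as `β² y · (β z · α x)`. Hence every
term of the Jacobi sum is a multiple of the single trilinear expression `β² x · (β y · α z)` in some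
order of its arguments, and the twelve terms cancel in pairs. The signs enter only as a commutation
factor of the grading, so the argument is that for color algebras over a commutative ring.
-/

section Grading

variable {ι M N σ τ : Type*} [DecidableEq ι]
  [AddCommMonoid M] [SetLike σ M] [AddSubmonoidClass σ M] (ℳ : ι → σ) [DirectSum.Decomposition ℳ]
  [AddCommMonoid N] [SetLike τ N] [AddSubmonoidClass τ N] (𝒩 : ι → τ) [DirectSum.Decomposition 𝒩]

theorem coe_decompose_map (f : M →+ N) (hf : ∀ i, ∀ x ∈ ℳ i, f x ∈ 𝒩 i) (x : M) (i : ι) :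
    (DirectSum.decompose 𝒩 (f x) i : N) = f (DirectSum.decompose ℳ x i) := by
  induction x using DirectSum.Decomposition.inductionOn ℳ with
  | zero => simp
  | @homogeneous j m =>
    obtain rfl | hji := eq_or_ne j i
    · rw [DirectSum.decompose_of_mem_same 𝒩 (hf _ _ m.2), DirectSum.decompose_of_mem_same ℳ m.2]
    · rw [DirectSum.decompose_of_mem_ne 𝒩 (hf _ _ m.2) hji,
        DirectSum.decompose_of_mem_ne ℳ m.2 hji, map_zero]
  | add x y hx hy => simp [DirectSum.decompose_add, hx, hy]

theorem mem_of_map_mem_of_injective (f : M →+ N) (hf : ∀ i, ∀ x ∈ ℳ i, f x ∈ 𝒩 i)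
    (hinj : Function.Injective f) {i : ι} {x : M} (hx : f x ∈ 𝒩 i) : x ∈ ℳ i := by
  have hcomp : (DirectSum.decompose ℳ x i : M) = x :=
    hinj <| by rw [← coe_decompose_map ℳ 𝒩 f hf, DirectSum.decompose_of_mem_same 𝒩 hx]
  exact hcomp ▸ SetLike.coe_mem _

end Grading

/-- A commutation factor on `G`: a bicharacter `ε` with `ε i j * ε j i = 1`, giving the sign rule of
a `G`-graded (color) Lie algebra. Multiplicativity in the first argument follows from the two
fields. -/
structure IsCommutationFactor {G R : Type*} [Add G] [CommMonoid R] (ε : G → G → R) : Prop where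
  map_add_right (i j l : G) : ε i (j + l) = ε i j * ε i l
  mul_swap (i j : G) : ε i j * ε j i = 1

theorem isCommutationFactor_neg_one_pow (R : Type*) [CommRing R] :
    IsCommutationFactor fun i j : ZMod 2 ↦ (-1 : R) ^ (i.val * j.val) where
  map_add_right i j l := by
    rw [pow_mul', ZMod.val_add, ← neg_one_pow_eq_pow_mod_two, pow_add, mul_pow, ← pow_mul',
      ← pow_mul']
  mul_swap i j := by
    rw [mul_comm j.val, ← pow_add, (Even.add_self _).neg_one_pow]

section BihomCommutator

variable {R A B : Type*} [CommRing R] [AddCommGroup A] [Module R A] [AddCommGroup B] [Module R B]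

/-- The BiHom-commutator `[x, y] = x·y − ε α⁻¹β(y)·αβ⁻¹(x)`, where the scalar `ε` stands for the
commutation factor of the degrees of `x` and `y`; `superComm` is the case `ε = (−1)^{|x||y|}`. -/
def bihomCommutator (μ : A →ₗ[R] A →ₗ[R] A) (α β : A ≃ₗ[R] A) (ε : R) (x y : A) : A :=
  μ x y - ε • μ (α.symm (β y)) (α (β.symm x))

theorem bihomCommutator_mem {G : Type*} [DecidableEq G] [AddCommMagma G]
    (𝒜 : G → Submodule R A) [DirectSum.Decomposition 𝒜]
    {μ : A →ₗ[R] A →ₗ[R] A} {α β : A ≃ₗ[R] A}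
    (hμ : ∀ i j, ∀ x ∈ 𝒜 i, ∀ y ∈ 𝒜 j, μ x y ∈ 𝒜 (i + j))
    (hα : ∀ i, ∀ x ∈ 𝒜 i, α x ∈ 𝒜 i) (hβ : ∀ i, ∀ x ∈ 𝒜 i, β x ∈ 𝒜 i)
    (ε : R) {i j : G} {x y : A} (hx : x ∈ 𝒜 i) (hy : y ∈ 𝒜 j) :
    bihomCommutator μ α β ε x y ∈ 𝒜 (i + j) := by
  have symm_mem (φ : A ≃ₗ[R] A) (hφ : ∀ i, ∀ x ∈ 𝒜 i, φ x ∈ 𝒜 i) {i : G} {x : A}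
      (hx : x ∈ 𝒜 i) : φ.symm x ∈ 𝒜 i :=
    mem_of_map_mem_of_injective 𝒜 𝒜 (φ : A →+ A) hφ φ.injective (by simpa using hx)
  have hswap : μ (α.symm (β y)) (α (β.symm x)) ∈ 𝒜 (i + j) :=
    add_comm j i ▸ hμ j i _ (symm_mem α hα (hβ j y hy)) _ (hα i _ (symm_mem β hβ hx))
  exact sub_mem (hμ i j x hx y hy) (Submodule.smul_mem _ ε hswap)

theorem map_bihomCommutator {μ : A →ₗ[R] A →ₗ[R] A} {α β : A ≃ₗ[R] A}
    {μ' : B →ₗ[R] B →ₗ[R] B} {α' β' : B ≃ₗ[R] B} (φ : A →ₗ[R] B)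
    (hμ : ∀ a b, φ (μ a b) = μ' (φ a) (φ b))
    (hα : Function.Semiconj φ α α') (hβ : Function.Semiconj φ β β') (ε : R) (x y : A) :
    φ (bihomCommutator μ α β ε x y) = bihomCommutator μ' α' β' ε (φ x) (φ y) := by
  have hαsymm : Function.Semiconj φ α.symm α'.symm :=
    hα.inverses_right α.right_inv α'.left_inv
  have hβsymm : Function.Semiconj φ β.symm β'.symm :=
    hβ.inverses_right β.right_inv β'.left_inv
  simp only [bihomCommutator, map_sub, map_smul, hμ, hα.eq, hβ.eq, hαsymm.eq, hβsymm.eq]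

variable {μ : A →ₗ[R] A →ₗ[R] A} {α β : A ≃ₗ[R] A}

theorem bihomCommutator_apply_apply (hαβ : Function.Commute α β) (ε : R) (x y : A) :
    bihomCommutator μ α β ε (β x) (α y) = μ (β x) (α y) - ε • μ (β y) (α x) := by
  rw [bihomCommutator, ← hαβ.eq, α.symm_apply_apply, β.symm_apply_apply]

theorem bihomCommutator_skew (hαβ : Function.Commute α β) {ε ε' : R} (hε : ε * ε' = 1) (x y : A) :
    bihomCommutator μ α β ε (β x) (α y) = -(ε • bihomCommutator μ α β ε' (β y) (α x)) := by
  rw [bihomCommutator_apply_apply hαβ, bihomCommutator_apply_apply hαβ, smul_sub, smul_smul, hε,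
    one_smul, neg_sub]

theorem mul_twist_eq_of_bihomAssociative (hαβ : Function.Commute α β)
    (hαμ : ∀ a b, α (μ a b) = μ (α a) (α b)) (hβμ : ∀ a b, β (μ a b) = μ (β a) (β b))
    (hassoc : ∀ a b c, μ (α a) (μ b c) = μ (μ a b) (β c)) (x y z : A) :
    μ (α.symm (β (μ (β y) (α z)))) (α (β.symm (β (β x)))) = μ (β (β y)) (μ (β z) (α x)) := by
  have hleft : α.symm (β (μ (β y) (α z))) = μ (α.symm (β (β y))) (β z) := by
    rw [α.symm_apply_eq, hαμ, hβμ, α.apply_symm_apply, hαβ.eq]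
  calc μ (α.symm (β (μ (β y) (α z)))) (α (β.symm (β (β x))))
      = μ (μ (α.symm (β (β y))) (β z)) (β (α x)) := by
        rw [hleft, β.symm_apply_apply, hαβ.eq]
    _ = μ (β (β y)) (μ (β z) (α x)) := by rw [← hassoc, α.apply_symm_apply]

theorem bihomCommutator_bihomCommutator (hαβ : Function.Commute α β)
    (hαμ : ∀ a b, α (μ a b) = μ (α a) (α b)) (hβμ : ∀ a b, β (μ a b) = μ (β a) (β b))
    (hassoc : ∀ a b c, μ (α a) (μ b c) = μ (μ a b) (β c)) (δ ε : R) (x y z : A) :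
    bihomCommutator μ α β δ (β (β x)) (bihomCommutator μ α β ε (β y) (α z)) =
      μ (β (β x)) (μ (β y) (α z)) - ε • μ (β (β x)) (μ (β z) (α y))
        - δ • (μ (β (β y)) (μ (β z) (α x)) - ε • μ (β (β z)) (μ (β y) (α x))) := by
  rw [bihomCommutator_apply_apply hαβ]
  simp only [bihomCommutator, map_sub, map_smul, LinearMap.sub_apply, LinearMap.smul_apply,
    mul_twist_eq_of_bihomAssociative hαβ hαμ hβμ hassoc]

-- Here `p = ε(z, x)`, `q = ε(x, y)`, `r = ε(y, z)` and primes are inverses, so that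
-- `ε(x, y + z) = q * p'`.
theorem bihomCommutator_jacobi (hαβ : Function.Commute α β)
    (hαμ : ∀ a b, α (μ a b) = μ (α a) (α b)) (hβμ : ∀ a b, β (μ a b) = μ (β a) (β b))
    (hassoc : ∀ a b c, μ (α a) (μ b c) = μ (μ a b) (β c))
    {p p' q q' r r' : R} (hp : p * p' = 1) (hq : q * q' = 1) (hr : r * r' = 1) (x y z : A) :
    p • bihomCommutator μ α β (q * p') (β (β x)) (bihomCommutator μ α β r (β y) (α z))
      + q • bihomCommutator μ α β (r * q') (β (β y)) (bihomCommutator μ α β p (β z) (α x))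
      + r • bihomCommutator μ α β (p * r') (β (β z)) (bihomCommutator μ α β q (β x) (α y)) =
    0 := by
  have hpq : p * q * p' = q := by linear_combination q * hp
  have hqr : q * r * q' = r := by linear_combination r * hq
  have hrp : r * p * r' = p := by linear_combination p * hr
  simp only [bihomCommutator_bihomCommutator hαβ hαμ hβμ hassoc, smul_sub, smul_smul,
    ← mul_assoc, hpq, hqr, hrp]
  module

end BihomCommutator

theorem bihomAssociative_gives_bihomLie_superalgebra_general
    {R G A : Type*} [CommRing R] [DecidableEq G] [AddCommMagma G] [AddCommGroup A] [Module R A]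
    (𝒜 : G → Submodule R A) [DirectSum.Decomposition 𝒜]
    {ε : G → G → R} (hε : IsCommutationFactor ε)
    (μ : A →ₗ[R] A →ₗ[R] A) (α β : A ≃ₗ[R] A)
    (hμ : ∀ i j, ∀ x ∈ 𝒜 i, ∀ y ∈ 𝒜 j, μ x y ∈ 𝒜 (i + j))
    (hα : ∀ i, ∀ x ∈ 𝒜 i, α x ∈ 𝒜 i) (hβ : ∀ i, ∀ x ∈ 𝒜 i, β x ∈ 𝒜 i)
    (hαβ : Function.Commute α β)
    (hαμ : ∀ a b, α (μ a b) = μ (α a) (α b)) (hβμ : ∀ a b, β (μ a b) = μ (β a) (β b))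
    (hassoc : ∀ a b c, μ (α a) (μ b c) = μ (μ a b) (β c)) :
    (∀ i j, ∀ x ∈ 𝒜 i, ∀ y ∈ 𝒜 j, bihomCommutator μ α β (ε i j) x y ∈ 𝒜 (i + j)) ∧
    (∀ i j x y, α (bihomCommutator μ α β (ε i j) x y) =
      bihomCommutator μ α β (ε i j) (α x) (α y)) ∧
    (∀ i j x y, β (bihomCommutator μ α β (ε i j) x y) =
      bihomCommutator μ α β (ε i j) (β x) (β y)) ∧
    (∀ i j x y, bihomCommutator μ α β (ε i j) (β x) (α y) =
      -(ε i j • bihomCommutator μ α β (ε j i) (β y) (α x))) ∧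
    (∀ i j l x y z,
      ε l i • bihomCommutator μ α β (ε i (j + l)) (β (β x))
          (bihomCommutator μ α β (ε j l) (β y) (α z))
        + ε i j • bihomCommutator μ α β (ε j (l + i)) (β (β y))
          (bihomCommutator μ α β (ε l i) (β z) (α x))
        + ε j l • bihomCommutator μ α β (ε l (i + j)) (β (β z))
          (bihomCommutator μ α β (ε i j) (β x) (α y)) = 0) := by
  refine ⟨fun i j x hx y hy ↦ bihomCommutator_mem 𝒜 hμ hα hβ (ε i j) hx hy,
    fun i j ↦ map_bihomCommutator (α : A →ₗ[R] A) hαμ (Function.Commute.refl α) hαβ (ε i j),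
    fun i j ↦ map_bihomCommutator (β : A →ₗ[R] A) hβμ hαβ.symm
      (Function.Commute.refl β) (ε i j),
    fun i j ↦ bihomCommutator_skew hαβ (hε.mul_swap i j), fun i j l x y z ↦ ?_⟩
  simp only [hε.map_add_right]
  exact bihomCommutator_jacobi hαβ hαμ hβμ hassoc (hε.mul_swap l i) (hε.mul_swap i j)
    (hε.mul_swap j l) x y z

/-- **Theorem 2.6.** If `(A, μ, α, β)` is a BiHom-associative superalgebra with bijective
structure maps `α`, `β`, then `A` with the supercommutator bracket is a BiHom-Lie
superalgebra: the bracket is even, compatible with `α` and `β`, BiHom-skew-supersymmetric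
and satisfies the BiHom-superJacobi identity. -/
theorem bihomAssociative_gives_bihomLie_superalgebra
    (K : Type*) [Field K] (A : Type*) [AddCommGroup A] [Module K A]
    (𝒜 : ZMod 2 → Submodule K A) [DirectSum.Decomposition 𝒜]
    (μ : A →ₗ[K] A →ₗ[K] A) (α β : A ≃ₗ[K] A)
    (hμ : ∀ (i j : ZMod 2), ∀ x ∈ 𝒜 i, ∀ y ∈ 𝒜 j, μ x y ∈ 𝒜 (i + j))
    (hαe : ∀ (i : ZMod 2), ∀ x ∈ 𝒜 i, α x ∈ 𝒜 i)
    (hβe : ∀ (i : ZMod 2), ∀ x ∈ 𝒜 i, β x ∈ 𝒜 i)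
    (hco : ∀ a : A, α (β a) = β (α a))
    (hαm : ∀ a b : A, α (μ a b) = μ (α a) (α b))
    (hβm : ∀ a b : A, β (μ a b) = μ (β a) (β b))
    (hass : ∀ a b c : A, μ (α a) (μ b c) = μ (μ a b) (β c)) :
    (∀ (i j : ZMod 2), ∀ x ∈ 𝒜 i, ∀ y ∈ 𝒜 j, superComm μ α β i j x y ∈ 𝒜 (i + j)) ∧
    (∀ (i j : ZMod 2), ∀ x ∈ 𝒜 i, ∀ y ∈ 𝒜 j,
      α (superComm μ α β i j x y) = superComm μ α β i j (α x) (α y)) ∧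
    (∀ (i j : ZMod 2), ∀ x ∈ 𝒜 i, ∀ y ∈ 𝒜 j,
      β (superComm μ α β i j x y) = superComm μ α β i j (β x) (β y)) ∧
    (∀ (i j : ZMod 2), ∀ x ∈ 𝒜 i, ∀ y ∈ 𝒜 j,
      superComm μ α β i j (β x) (α y)
        = -(((-1 : K) ^ (i.val * j.val)) • superComm μ α β j i (β y) (α x))) ∧
    (∀ (i j l : ZMod 2), ∀ x ∈ 𝒜 i, ∀ y ∈ 𝒜 j, ∀ z ∈ 𝒜 l,
      ((-1 : K) ^ (i.val * l.val)) •
          superComm μ α β i (j + l) (β (β x)) (superComm μ α β j l (β y) (α z))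
        + ((-1 : K) ^ (j.val * i.val)) •
          superComm μ α β j (l + i) (β (β y)) (superComm μ α β l i (β z) (α x))
        + ((-1 : K) ^ (l.val * j.val)) •
          superComm μ α β l (i + j) (β (β z)) (superComm μ α β i j (β x) (α y)) = 0) := by
  obtain ⟨hmem, hmapα, hmapβ, hskew, hjacobi⟩ :=
    bihomAssociative_gives_bihomLie_superalgebra_general 𝒜 (isCommutationFactor_neg_one_pow K)
      μ α β hμ hαe hβe hco hαm hβm hass
  refine ⟨hmem, fun i j x _ y _ ↦ hmapα i j x y, fun i j x _ y _ ↦ hmapβ i j x y,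
    fun i j x _ y _ ↦ hskew i j x y, fun i j l x _ y _ z _ ↦ ?_⟩
  rw [mul_comm i.val, mul_comm j.val, mul_comm l.val j.val]
  exact hjacobi i j l x y z
end

section
/- Let (L, [·,·]) be a Lie superalgebra over a field k, and let α, β : L → L be two even, mutually commuting algebra homomorphisms (α∘β = β∘α, α[x,y] = [α(x), α(y)], β[x,y] = [β(x), β(y)]). Define a new bracket by [x, y]_{α,β} = [α(x), β(y)]. Then (L, [·,·]_{α,β}, α, β) is a BiHom-Lie superalgebra. (Theorem 2.7) -/
/-!
Since `α` and `β` commute and respect the bracket, `[β x, α y]_{α,β} = [αβ x, αβ y]` and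
`[β² x, [β y, α z]_{α,β}]_{α,β} = [δ x, [δ y, δ z]]` with `δ = αβ²`. The BiHom axioms for the
twisted bracket are therefore the original axioms evaluated at the elements `αβ x` and `δ x`,
which have the same degree as `x`.
-/

section

variable {ι R L : Type*} [CommRing R] [AddCommGroup L] [Module R L]

/-- `IsLieColorAlgebra ε 𝒜 b` says that the bracket `b` on `L`, with homogeneous components `𝒜 i`,
satisfies the axioms of a Lie color algebra with commutation factor `ε`. The factor is an arbitrary
function; a Lie superalgebra is the case `ι = ZMod 2`, `ε i j = (-1) ^ (i.val * j.val)`. -/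
structure IsLieColorAlgebra [Add ι] (ε : ι → ι → R) (𝒜 : ι → Submodule R L)
    (b : L →ₗ[R] L →ₗ[R] L) : Prop where
  bracket_mem : ∀ i j, ∀ x ∈ 𝒜 i, ∀ y ∈ 𝒜 j, b x y ∈ 𝒜 (i + j)
  skew : ∀ i j, ∀ x ∈ 𝒜 i, ∀ y ∈ 𝒜 j, b x y = -(ε i j • b y x)
  jacobi : ∀ i j l, ∀ x ∈ 𝒜 i, ∀ y ∈ 𝒜 j, ∀ z ∈ 𝒜 l,
    ε l i • b x (b y z) + ε i j • b y (b z x) + ε j l • b z (b x y) = 0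

/-- `IsGradedEnd 𝒜 b γ` says that `γ` is a degree-preserving endomorphism of the graded algebra
with product `b` (an even algebra homomorphism, when the grading is by `ZMod 2`). -/
structure IsGradedEnd (𝒜 : ι → Submodule R L) (b : L →ₗ[R] L →ₗ[R] L) (γ : L →ₗ[R] L) :
    Prop where
  map_mem : ∀ i, ∀ x ∈ 𝒜 i, γ x ∈ 𝒜 i
  map_bracket : ∀ x y, γ (b x y) = b (γ x) (γ y)

/-- `IsBiHomLieColorAlgebra ε 𝒜 b α β` says that `b` and the structure maps `α`, `β` satisfy the
axioms of a BiHom-Lie color algebra with commutation factor `ε`. As in `IsLieColorAlgebra`, the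
BiHom-Lie superalgebras are the case `ι = ZMod 2`, `ε i j = (-1) ^ (i.val * j.val)`. -/
structure IsBiHomLieColorAlgebra [Add ι] (ε : ι → ι → R) (𝒜 : ι → Submodule R L)
    (b : L →ₗ[R] L →ₗ[R] L) (α β : L →ₗ[R] L) : Prop where
  bracket_mem : ∀ i j, ∀ x ∈ 𝒜 i, ∀ y ∈ 𝒜 j, b x y ∈ 𝒜 (i + j)
  isGradedEnd_left : IsGradedEnd 𝒜 b α
  isGradedEnd_right : IsGradedEnd 𝒜 b β
  commute : Function.Commute α β
  skew : ∀ i j, ∀ x ∈ 𝒜 i, ∀ y ∈ 𝒜 j, b (β x) (α y) = -(ε i j • b (β y) (α x))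
  jacobi : ∀ i j l, ∀ x ∈ 𝒜 i, ∀ y ∈ 𝒜 j, ∀ z ∈ 𝒜 l,
    ε l i • b (β (β x)) (b (β y) (α z)) + ε i j • b (β (β y)) (b (β z) (α x))
      + ε j l • b (β (β z)) (b (β x) (α y)) = 0

/-- The Yau twist `[x, y]_{α,β} = [α x, β y]` of the bracket `b` along `α` and `β`. -/
def yauTwist (b : L →ₗ[R] L →ₗ[R] L) (α β : L →ₗ[R] L) : L →ₗ[R] L →ₗ[R] L :=
  b.compl₁₂ α β

variable {𝒜 : ι → Submodule R L} {b : L →ₗ[R] L →ₗ[R] L} {α β γ : L →ₗ[R] L}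

theorem yauTwist_apply (x y : L) : yauTwist b α β x y = b (α x) (β y) :=
  rfl

theorem IsGradedEnd.comp (hα : IsGradedEnd 𝒜 b α) (hβ : IsGradedEnd 𝒜 b β) :
    IsGradedEnd 𝒜 b (α ∘ₗ β) where
  map_mem i x hx := hα.map_mem i _ (hβ.map_mem i x hx)
  map_bracket x y := by simp only [LinearMap.comp_apply, hβ.map_bracket, hα.map_bracket]

theorem IsGradedEnd.yauTwist (hγ : IsGradedEnd 𝒜 b γ) (hγα : Function.Commute γ α)
    (hγβ : Function.Commute γ β) : IsGradedEnd 𝒜 (yauTwist b α β) γ where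
  map_mem := hγ.map_mem
  map_bracket x y := by simp only [yauTwist_apply, hγ.map_bracket, hγα.eq, hγβ.eq]

theorem yauTwist_apply_of_commute (hαβ : Function.Commute α β) (x y : L) :
    yauTwist b α β (β x) (α y) = b ((α ∘ₗ β) x) ((α ∘ₗ β) y) := by
  simp only [yauTwist_apply, LinearMap.comp_apply, hαβ.eq]

theorem yauTwist_yauTwist_apply_of_commute (hβ : ∀ x y, β (b x y) = b (β x) (β y))
    (hαβ : Function.Commute α β) (x y z : L) :
    yauTwist b α β (β (β x)) (yauTwist b α β (β y) (α z)) =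
      b ((α ∘ₗ β ∘ₗ β) x) (b ((α ∘ₗ β ∘ₗ β) y) ((α ∘ₗ β ∘ₗ β) z)) := by
  simp only [yauTwist_apply, hβ, LinearMap.comp_apply, hαβ.eq]

theorem yauTwist_lieSuper_gives_bihomLie_superalgebra_general [Add ι] {ε : ι → ι → R}
    (hb : IsLieColorAlgebra ε 𝒜 b) (hα : IsGradedEnd 𝒜 b α) (hβ : IsGradedEnd 𝒜 b β)
    (hαβ : Function.Commute α β) : IsBiHomLieColorAlgebra ε 𝒜 (yauTwist b α β) α β where
  bracket_mem i j x hx y hy := hb.bracket_mem i j _ (hα.map_mem i x hx) _ (hβ.map_mem j y hy)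
  isGradedEnd_left := hα.yauTwist (.refl α) hαβ
  isGradedEnd_right := hβ.yauTwist hαβ.symm (.refl β)
  commute := hαβ
  skew i j x hx y hy := by
    have mem := (hα.comp hβ).map_mem
    simp only [yauTwist_apply_of_commute hαβ]
    exact hb.skew i j _ (mem i x hx) _ (mem j y hy)
  jacobi i j l x hx y hy z hz := by
    have mem := (hα.comp (hβ.comp hβ)).map_mem
    simp only [yauTwist_yauTwist_apply_of_commute hβ.map_bracket hαβ]
    exact hb.jacobi i j l _ (mem i x hx) _ (mem j y hy) _ (mem l z hz)

end

/-- **Theorem 2.7 (Yau twist).** Let `(L, [·,·])` be a Lie superalgebra and `α`, `β` two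
even, mutually commuting algebra homomorphisms of `L`.  Then `L` with the new bracket
`[x, y]_{α,β} = [α(x), β(y)]` and structure maps `α`, `β` is a BiHom-Lie superalgebra:
the new bracket is even, compatible with `α` and `β`, BiHom-skew-supersymmetric and
satisfies the BiHom-superJacobi identity. -/
theorem yauTwist_lieSuper_gives_bihomLie_superalgebra
    (K : Type*) [Field K] (L : Type*) [AddCommGroup L] [Module K L]
    (𝒜 : ZMod 2 → Submodule K L) [DirectSum.Decomposition 𝒜]
    (b : L →ₗ[K] L →ₗ[K] L) (α β : L →ₗ[K] L)
    (hb : ∀ (i j : ZMod 2), ∀ x ∈ 𝒜 i, ∀ y ∈ 𝒜 j, b x y ∈ 𝒜 (i + j))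
    (hαe : ∀ (i : ZMod 2), ∀ x ∈ 𝒜 i, α x ∈ 𝒜 i)
    (hβe : ∀ (i : ZMod 2), ∀ x ∈ 𝒜 i, β x ∈ 𝒜 i)
    (hskew : ∀ (i j : ZMod 2), ∀ x ∈ 𝒜 i, ∀ y ∈ 𝒜 j,
      b x y = -(((-1 : K) ^ (i.val * j.val)) • b y x))
    (hjac : ∀ (i j l : ZMod 2), ∀ x ∈ 𝒜 i, ∀ y ∈ 𝒜 j, ∀ z ∈ 𝒜 l,
      ((-1 : K) ^ (i.val * l.val)) • b x (b y z)
        + ((-1 : K) ^ (j.val * i.val)) • b y (b z x)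
        + ((-1 : K) ^ (l.val * j.val)) • b z (b x y) = 0)
    (hco : ∀ a : L, α (β a) = β (α a))
    (hαh : ∀ x y : L, α (b x y) = b (α x) (α y))
    (hβh : ∀ x y : L, β (b x y) = b (β x) (β y)) :
    -- the twisted bracket `[x, y]_{α,β} = b (α x) (β y)` makes `L` a BiHom-Lie superalgebra
    (∀ (i j : ZMod 2), ∀ x ∈ 𝒜 i, ∀ y ∈ 𝒜 j, b (α x) (β y) ∈ 𝒜 (i + j)) ∧
    (∀ x y : L, α (b (α x) (β y)) = b (α (α x)) (β (α y))) ∧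
    (∀ x y : L, β (b (α x) (β y)) = b (α (β x)) (β (β y))) ∧
    (∀ (i j : ZMod 2), ∀ x ∈ 𝒜 i, ∀ y ∈ 𝒜 j,
      b (α (β x)) (β (α y)) = -(((-1 : K) ^ (i.val * j.val)) • b (α (β y)) (β (α x)))) ∧
    (∀ (i j l : ZMod 2), ∀ x ∈ 𝒜 i, ∀ y ∈ 𝒜 j, ∀ z ∈ 𝒜 l,
      ((-1 : K) ^ (i.val * l.val)) •
          b (α (β (β x))) (β (b (α (β y)) (β (α z))))
        + ((-1 : K) ^ (j.val * i.val)) •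
          b (α (β (β y))) (β (b (α (β z)) (β (α x))))
        + ((-1 : K) ^ (l.val * j.val)) •
          b (α (β (β z))) (β (b (α (β x)) (β (α y)))) = 0) := by
  have h := yauTwist_lieSuper_gives_bihomLie_superalgebra_general
    (ε := fun i j : ZMod 2 ↦ (-1 : K) ^ (i.val * j.val))
    ⟨hb, hskew, by simpa only [mul_comm] using hjac⟩ ⟨hαe, hαh⟩ ⟨hβe, hβh⟩ hco
  exact ⟨h.bracket_mem, h.isGradedEnd_left.map_bracket, h.isGradedEnd_right.map_bracket, h.skew,
    by simpa only [mul_comm, yauTwist_apply] using h.jacobi⟩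
end

section
/- Every BiHom-associative superalgebra (A, μ, α, β) over a field k with α and β bijective is a BiHom-Lie admissible superalgebra; that is, the supercommutator bracket [x, y] = xy − (−1)^{|x||y|} (α⁻¹(β(y)))(α(β⁻¹(x))) satisfies the BiHom-superJacobi identity. (Remark 3.2) -/
/-- A BiHom-associative algebra, without a grading, whose commuting structure maps are bijective:
`α` and `β` are multiplicative and associativity holds up to the twist `α(a)(bc) = (ab)β(c)`. -/
structure IsBiHomAssociative {K A : Type*} [CommRing K] [AddCommGroup A] [Module K A]
    (μ : A →ₗ[K] A →ₗ[K] A) (α β : A ≃ₗ[K] A) : Prop where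
  comm : ∀ a, α (β a) = β (α a)
  α_mul : ∀ a b, α (μ a b) = μ (α a) (α b)
  β_mul : ∀ a b, β (μ a b) = μ (β a) (β b)
  assoc : ∀ a b c, μ (α a) (μ b c) = μ (μ a b) (β c)

section

variable {K A : Type*} [CommRing K] [AddCommGroup A] [Module K A]

/-- The BiHom-commutator with an arbitrary scalar `s` in place of the sign `(-1)^{|x||y|}`; the
scalar is the value of a commutation factor in the case of colour algebras. -/
def twistedComm (μ : A →ₗ[K] A →ₗ[K] A) (α β : A ≃ₗ[K] A) (s : K) (x y : A) : A :=
  μ x y - s • μ (α.symm (β y)) (α (β.symm x))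

/-- The BiHom analogue of the triple product `x(yz)`, with the twists of the Jacobi identity. -/
def twistedTriple (μ : A →ₗ[K] A →ₗ[K] A) (α β : A ≃ₗ[K] A) (x y z : A) : A :=
  μ (β (β x)) (μ (β y) (α z))

variable {μ : A →ₗ[K] A →ₗ[K] A} {α β : A ≃ₗ[K] A}

namespace IsBiHomAssociative

theorem α_symm_β_α (h : IsBiHomAssociative μ α β) (a : A) :
    α.symm (β (α a)) = β a := by
  rw [← h.comm, α.symm_apply_apply]

theorem α_symm_mul (h : IsBiHomAssociative μ α β) (a b : A) :
    α.symm (μ a b) = μ (α.symm a) (α.symm b) := by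
  rw [LinearEquiv.symm_apply_eq, h.α_mul, α.apply_symm_apply, α.apply_symm_apply]

theorem symm_mul_mul_eq_twistedTriple (h : IsBiHomAssociative μ α β) (x y z : A) :
    μ (α.symm (β (μ (β x) (α y)))) (α (β z)) = twistedTriple μ α β x y z := by
  calc μ (α.symm (β (μ (β x) (α y)))) (α (β z))
      = μ (μ (α.symm (β (β x))) (β y)) (β (α z)) := by
        rw [h.β_mul, h.α_symm_mul, h.α_symm_β_α, h.comm z]
    _ = μ (α (α.symm (β (β x)))) (μ (β y) (α z)) := (h.assoc _ _ _).symm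
    _ = twistedTriple μ α β x y z := by rw [α.apply_symm_apply, twistedTriple]

theorem twistedComm_apply_apply (h : IsBiHomAssociative μ α β) (s : K) (y z : A) :
    twistedComm μ α β s (β y) (α z) = μ (β y) (α z) - s • μ (β z) (α y) := by
  rw [twistedComm, h.α_symm_β_α, β.symm_apply_apply]

theorem twistedComm_twistedComm (h : IsBiHomAssociative μ α β) (s t : K) (x y z : A) :
    twistedComm μ α β s (β (β x)) (twistedComm μ α β t (β y) (α z)) =
      twistedTriple μ α β x y z - t • twistedTriple μ α β x z y
        - s • (twistedTriple μ α β y z x - t • twistedTriple μ α β z y x) := by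
  rw [h.twistedComm_apply_apply, twistedComm, β.symm_apply_apply]
  simp only [map_sub, map_smul, LinearMap.sub_apply, LinearMap.smul_apply,
    h.symm_mul_mul_eq_twistedTriple, twistedTriple]

theorem smul_twistedComm_twistedComm (h : IsBiHomAssociative μ α β) {a b c p : K}
    (hp : c * p = a) (x y z : A) :
    c • twistedComm μ α β p (β (β x)) (twistedComm μ α β b (β y) (α z)) =
      c • twistedTriple μ α β x y z - (b * c) • twistedTriple μ α β x z y
        - a • twistedTriple μ α β y z x + (a * b) • twistedTriple μ α β z y x := by
  rw [h.twistedComm_twistedComm, ← hp]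
  module

end IsBiHomAssociative

/-- For colour algebras, a commutation factor `ε` on the grading group gives
`a = ε(i, j)`, `b = ε(j, l)`, `c = ε(l, i)`, `p = ε(i, j + l)`, `q = ε(j, l + i)`,
`r = ε(l, i + j)`. -/
theorem bihomAssociative_is_bihomLie_admissible_general (h : IsBiHomAssociative μ α β)
    {a b c p q r : K} (hp : c * p = a) (hq : a * q = b) (hr : b * r = c) (x y z : A) :
    c • twistedComm μ α β p (β (β x)) (twistedComm μ α β b (β y) (α z))
      + a • twistedComm μ α β q (β (β y)) (twistedComm μ α β c (β z) (α x))
      + b • twistedComm μ α β r (β (β z)) (twistedComm μ α β a (β x) (α y)) = 0 := by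
  rw [h.smul_twistedComm_twistedComm hp, h.smul_twistedComm_twistedComm hq,
    h.smul_twistedComm_twistedComm hr]
  module

end

theorem neg_one_pow_val_mul_val_add {R : Type*} [Monoid R] [HasDistribNeg R] (i j l : ZMod 2) :
    (-1 : R) ^ (l.val * i.val) * (-1) ^ (i.val * (j + l).val) = (-1) ^ (i.val * j.val) := by
  rw [← pow_add]
  exact neg_one_pow_congr (by decide +revert)

/-- **Remark 3.2.** Every BiHom-associative superalgebra with bijective structure maps
`α`, `β` is BiHom-Lie admissible: its supercommutator bracket satisfies the
BiHom-superJacobi identity on homogeneous elements. -/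
theorem bihomAssociative_is_bihomLie_admissible
    (K : Type*) [Field K] (A : Type*) [AddCommGroup A] [Module K A]
    (𝒜 : ZMod 2 → Submodule K A) [DirectSum.Decomposition 𝒜]
    (μ : A →ₗ[K] A →ₗ[K] A) (α β : A ≃ₗ[K] A)
    (hμ : ∀ (i j : ZMod 2), ∀ x ∈ 𝒜 i, ∀ y ∈ 𝒜 j, μ x y ∈ 𝒜 (i + j))
    (hαe : ∀ (i : ZMod 2), ∀ x ∈ 𝒜 i, α x ∈ 𝒜 i)
    (hβe : ∀ (i : ZMod 2), ∀ x ∈ 𝒜 i, β x ∈ 𝒜 i)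
    (hco : ∀ a : A, α (β a) = β (α a))
    (hαm : ∀ a b : A, α (μ a b) = μ (α a) (α b))
    (hβm : ∀ a b : A, β (μ a b) = μ (β a) (β b))
    (hass : ∀ a b c : A, μ (α a) (μ b c) = μ (μ a b) (β c)) :
    ∀ (i j l : ZMod 2), ∀ x ∈ 𝒜 i, ∀ y ∈ 𝒜 j, ∀ z ∈ 𝒜 l,
      ((-1 : K) ^ (i.val * l.val)) •
          superComm μ α β i (j + l) (β (β x)) (superComm μ α β j l (β y) (α z))
        + ((-1 : K) ^ (j.val * i.val)) •
          superComm μ α β j (l + i) (β (β y)) (superComm μ α β l i (β z) (α x))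
        + ((-1 : K) ^ (l.val * j.val)) •
          superComm μ α β l (i + j) (β (β z)) (superComm μ α β i j (β x) (α y)) = 0 := by
  have h : IsBiHomAssociative μ α β := ⟨hco, hαm, hβm, hass⟩
  intro i j l x _ y _ z _
  rw [mul_comm i.val l.val, mul_comm j.val i.val, mul_comm l.val j.val]
  exact bihomAssociative_is_bihomLie_admissible_general h (neg_one_pow_val_mul_val_add i j l)
    (neg_one_pow_val_mul_val_add j l i) (neg_one_pow_val_mul_val_add l i j) x y z
end

section
/- Let (V, μ, α, β) be a BiHom-superalgebra over a field k with α and β bijective, and for homogeneous x, y, z set S(x, y, z) = (−1)^{|x||z|} as_{α,β}(α⁻¹β²(x), β(y), α(z)) + (−1)^{|y||x|} as_{α,β}(α⁻¹β²(y), β(z), α(x)) + (−1)^{|z||y|} as_{α,β}(α⁻¹β²(z), β(x), α(y)). Then V is a BiHom-Lie admissible superalgebra if and only if S(x, y, z) = (−1)^{|x||y|+|y||z|+|z||x|} S(x, z, y) for all homogeneous x, y, z ∈ V. (Proposition 3.5) -/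
/-- The `(α,β)`-associator `as_{α,β}(x, y, z) = α(x)(yz) − (xy)β(z)`. -/
noncomputable def biAssoc {K : Type*} [Field K] {A : Type*} [AddCommGroup A] [Module K A]
    (μ : A →ₗ[K] A →ₗ[K] A) (α β : A ≃ₗ[K] A) (x y z : A) : A :=
  μ (α x) (μ y z) - μ (μ x y) (β z)

/-- `S(x, y, z) = (−1)^{|x||z|} as(α⁻¹β²(x), β(y), α(z)) + (−1)^{|y||x|} as(α⁻¹β²(y), β(z), α(x))
 + (−1)^{|z||y|} as(α⁻¹β²(z), β(x), α(y))` for `x`, `y`, `z` of parities `i`, `j`, `l`. -/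
noncomputable def Sfun {K : Type*} [Field K] {A : Type*} [AddCommGroup A] [Module K A]
    (μ : A →ₗ[K] A →ₗ[K] A) (α β : A ≃ₗ[K] A) (i j l : ZMod 2) (x y z : A) : A :=
  ((-1 : K) ^ (i.val * l.val)) • biAssoc μ α β (α.symm (β (β x))) (β y) (α z)
    + ((-1 : K) ^ (j.val * i.val)) • biAssoc μ α β (α.symm (β (β y))) (β z) (α x)
    + ((-1 : K) ^ (l.val * j.val)) • biAssoc μ α β (α.symm (β (β z))) (β x) (α y)

/-!
A BiHom-superalgebra with bijective structure maps is a Yau twist of the superalgebra with product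
`x ∘ y = α⁻¹(x) β⁻¹(y)`. In terms of `∘`, the bracket `[x, y]` is the ordinary supercommutator of
`α x` and `β y`, and `as_{α,β}(x, y, z)` is the ordinary associator of `α² x`, `αβ y`, `β² z`.
The twists in the Jacobi identity and in `S` are chosen so that every argument becomes `αβ²` of
the original one. For an ordinary product, expanding the double supercommutators shows that the
super-Jacobiator of `x, y, z` is `S(x, y, z) - (-1)^{|x||y|+|y||z|+|z||x|} S(x, z, y)`.
-/

section KoszulSign

/-- The sign `(-1)^{|x||y|}` of interchanging elements of parities `i` and `j`. The exponent is
formed from the representatives of `i` and `j` in `{0, 1}`, as in `superComm` and `Sfun`. -/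
def koszulSign (R : Type*) [Monoid R] [HasDistribNeg R] (i j : ZMod 2) : R :=
  (-1) ^ (i.val * j.val)

variable {R : Type*} [Monoid R] [HasDistribNeg R]

theorem koszulSign_comm (i j : ZMod 2) : koszulSign R i j = koszulSign R j i := by
  rw [koszulSign, koszulSign, mul_comm]

theorem koszulSign_mul_self (i j : ZMod 2) : koszulSign R i j * koszulSign R i j = 1 := by
  rw [koszulSign, ← pow_add, Even.neg_one_pow ⟨_, rfl⟩]

theorem koszulSign_add_right (i j l : ZMod 2) :
    koszulSign R i (j + l) = koszulSign R i j * koszulSign R i l := by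
  have hmod : (-1 : R) ^ (j + l).val = (-1) ^ (j.val + l.val) := by
    rw [ZMod.val_add]
    exact neg_one_pow_congr (by simp [Nat.even_iff])
  simp only [koszulSign, mul_comm i.val]
  rw [pow_mul, hmod, ← pow_mul, add_mul, pow_add]

end KoszulSign

section BiHom

variable {K : Type*} [Field K] {A : Type*} [AddCommGroup A] [Module K A]

/-- The cyclic sum of double supercommutators
`(−1)^{|x||z|} [β²(x), [β(y), α(z)]] + (−1)^{|y||x|} [β²(y), [β(z), α(x)]]
+ (−1)^{|z||y|} [β²(z), [β(x), α(y)]]` for `x`, `y`, `z` of parities `i`, `j`, `l`, whose vanishing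
is the BiHom-superJacobi identity. The parities are labels: `x`, `y`, `z` are arbitrary. -/
noncomputable def superJacobiator (μ : A →ₗ[K] A →ₗ[K] A) (α β : A ≃ₗ[K] A) (i j l : ZMod 2)
    (x y z : A) : A :=
  koszulSign K i l • superComm μ α β i (j + l) (β (β x)) (superComm μ α β j l (β y) (α z))
    + koszulSign K j i • superComm μ α β j (l + i) (β (β y)) (superComm μ α β l i (β z) (α x))
    + koszulSign K l j • superComm μ α β l (i + j) (β (β z)) (superComm μ α β i j (β x) (α y))

section Ordinary

variable (ν : A →ₗ[K] A →ₗ[K] A)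

theorem superComm_one (i j : ZMod 2) (x y : A) :
    superComm ν 1 1 i j x y = ν x y - koszulSign K i j • ν y x :=
  rfl

theorem biAssoc_one (x y z : A) : biAssoc ν 1 1 x y z = ν x (ν y z) - ν (ν x y) z :=
  rfl

theorem Sfun_one (i j l : ZMod 2) (x y z : A) :
    Sfun ν 1 1 i j l x y z = koszulSign K i l • biAssoc ν 1 1 x y z
      + koszulSign K j i • biAssoc ν 1 1 y z x + koszulSign K l j • biAssoc ν 1 1 z x y :=
  rfl

theorem superJacobiator_one (i j l : ZMod 2) (x y z : A) :
    superJacobiator ν 1 1 i j l x y z =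
      koszulSign K i l • superComm ν 1 1 i (j + l) x (superComm ν 1 1 j l y z)
        + koszulSign K j i • superComm ν 1 1 j (l + i) y (superComm ν 1 1 l i z x)
        + koszulSign K l j • superComm ν 1 1 l (i + j) z (superComm ν 1 1 i j x y) :=
  rfl

theorem map_superComm_one {B : Type*} [AddCommGroup B] [Module K B] {ν : A →ₗ[K] A →ₗ[K] A}
    {ν' : B →ₗ[K] B →ₗ[K] B} {φ : A →ₗ[K] B} (hφ : ∀ a b, φ (ν a b) = ν' (φ a) (φ b))
    (i j : ZMod 2) (x y : A) :
    φ (superComm ν 1 1 i j x y) = superComm ν' 1 1 i j (φ x) (φ y) := by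
  simp only [superComm_one, map_sub, map_smul, hφ]

theorem koszulSign_smul_superComm_superComm_one (i j l : ZMod 2) (x y z : A) :
    koszulSign K i l • superComm ν 1 1 i (j + l) x (superComm ν 1 1 j l y z) =
      koszulSign K i l • ν x (ν y z) - (koszulSign K i l * koszulSign K j l) • ν x (ν z y)
        - koszulSign K i j • ν (ν y z) x
        + (koszulSign K i j * koszulSign K j l) • ν (ν z y) x := by
  simp only [superComm_one, koszulSign_add_right, map_sub, map_smul, LinearMap.sub_apply,
    LinearMap.smul_apply]
  have hsq : koszulSign K i l * koszulSign K i l = 1 := koszulSign_mul_self i l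
  linear_combination (norm := module) hsq •
    ((koszulSign K i j * koszulSign K j l) • ν (ν z y) x - koszulSign K i j • ν (ν y z) x)

theorem koszulSign_smul_Sfun_one_swap (i j l : ZMod 2) (x y z : A) :
    (koszulSign K i j * koszulSign K j l * koszulSign K l i) • Sfun ν 1 1 i l j x z y =
      (koszulSign K j l * koszulSign K l i) • biAssoc ν 1 1 x z y
        + (koszulSign K i j * koszulSign K j l) • biAssoc ν 1 1 z y x
        + (koszulSign K i j * koszulSign K l i) • biAssoc ν 1 1 y x z := by
  have hij : koszulSign K i j * koszulSign K i j = 1 := koszulSign_mul_self i j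
  have hjl : koszulSign K j l * koszulSign K j l = 1 := koszulSign_mul_self j l
  have hli : koszulSign K l i * koszulSign K l i = 1 := koszulSign_mul_self l i
  rw [Sfun_one]
  linear_combination (norm := module)
    hij • ((koszulSign K j l * koszulSign K l i) • biAssoc ν 1 1 x z y)
      + hli • ((koszulSign K i j * koszulSign K j l) • biAssoc ν 1 1 z y x)
      + hjl • ((koszulSign K i j * koszulSign K l i) • biAssoc ν 1 1 y x z)

theorem superJacobiator_one_eq_Sfun_sub (i j l : ZMod 2) (x y z : A) :
    superJacobiator ν 1 1 i j l x y z = Sfun ν 1 1 i j l x y z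
      - (koszulSign K i j * koszulSign K j l * koszulSign K l i) • Sfun ν 1 1 i l j x z y := by
  rw [superJacobiator_one, koszulSign_smul_Sfun_one_swap, Sfun_one]
  simp only [koszulSign_smul_superComm_superComm_one, biAssoc_one]
  rw [koszulSign_comm j i, koszulSign_comm l j, koszulSign_comm l i]
  module

end Ordinary

section Untwist

/-- The product `x ∘ y = α⁻¹(x) β⁻¹(y)`, of which `μ` is the Yau twist `μ(x, y) = α(x) ∘ β(y)`. -/
def untwist (μ : A →ₗ[K] A →ₗ[K] A) (α β : A ≃ₗ[K] A) : A →ₗ[K] A →ₗ[K] A :=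
  μ.compl₁₂ α.symm.toLinearMap β.symm.toLinearMap

theorem untwist_apply (μ : A →ₗ[K] A →ₗ[K] A) (α β : A ≃ₗ[K] A) (x y : A) :
    untwist μ α β x y = μ (α.symm x) (β.symm y) :=
  rfl

theorem untwist_apply_apply (μ : A →ₗ[K] A →ₗ[K] A) (α β : A ≃ₗ[K] A) (x y : A) :
    untwist μ α β (α x) (β y) = μ x y := by
  simp only [untwist_apply, LinearEquiv.symm_apply_apply]

variable {μ : A →ₗ[K] A →ₗ[K] A} {α β : A ≃ₗ[K] A}

theorem map_untwist {φ : A →ₗ[K] A} (hα : ∀ a, φ (α a) = α (φ a)) (hβ : ∀ a, φ (β a) = β (φ a))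
    (hφ : ∀ a b, φ (μ a b) = μ (φ a) (φ b)) (x y : A) :
    φ (untwist μ α β x y) = untwist μ α β (φ x) (φ y) := by
  obtain ⟨x, rfl⟩ := α.surjective x
  obtain ⟨y, rfl⟩ := β.surjective y
  simp only [hα, hβ, untwist_apply_apply, hφ]

theorem superComm_eq_untwist (hco : ∀ a, α (β a) = β (α a)) (i j : ZMod 2) (x y : A) :
    superComm μ α β i j x y = superComm (untwist μ α β) 1 1 i j (α x) (β y) := by
  have hαβ : α (β.symm x) = β.symm (α x) := by
    rw [LinearEquiv.eq_symm_apply, ← hco, LinearEquiv.apply_symm_apply]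
  rw [superComm_one, untwist_apply_apply, untwist_apply, ← hαβ, superComm, koszulSign]

variable (hco : ∀ a, α (β a) = β (α a)) (hαm : ∀ a b, α (μ a b) = μ (α a) (α b))
  (hβm : ∀ a b, β (μ a b) = μ (β a) (β b))
include hco hβm

theorem superComm_superComm_eq_untwist (i j l : ZMod 2) (x y z : A) :
    superComm μ α β i (j + l) (β (β x)) (superComm μ α β j l (β y) (α z)) =
      superComm (untwist μ α β) 1 1 i (j + l) (α (β (β x)))
        (superComm (untwist μ α β) 1 1 j l (α (β (β y))) (α (β (β z)))) := by
  have hβ_untwist := map_untwist (φ := β.toLinearMap) (fun a => (hco a).symm) (fun _ => rfl) hβm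
  have hβ_superComm (a b : A) : β (superComm (untwist μ α β) 1 1 j l a b) =
      superComm (untwist μ α β) 1 1 j l (β a) (β b) :=
    map_superComm_one hβ_untwist j l a b
  simp only [superComm_eq_untwist hco, hβ_superComm, hco]

theorem superJacobiator_eq_untwist (i j l : ZMod 2) (x y z : A) :
    superJacobiator μ α β i j l x y z =
      superJacobiator (untwist μ α β) 1 1 i j l (α (β (β x))) (α (β (β y))) (α (β (β z))) := by
  rw [superJacobiator_one]
  simp only [superJacobiator, superComm_superComm_eq_untwist hco hβm]

include hαm

theorem biAssoc_eq_untwist (x y z : A) :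
    biAssoc μ α β x y z =
      biAssoc (untwist μ α β) 1 1 (α (α x)) (α (β y)) (β (β z)) := by
  have hright : untwist μ α β (α (β y)) (β (β z)) = β (μ y z) := by
    rw [untwist_apply_apply, hβm]
  have hleft : untwist μ α β (α (α x)) (α (β y)) = α (μ x y) := by
    rw [hco, untwist_apply_apply, hαm]
  rw [biAssoc_one, hright, hleft, untwist_apply_apply, untwist_apply_apply, biAssoc]

theorem Sfun_eq_untwist (i j l : ZMod 2) (x y z : A) :
    Sfun μ α β i j l x y z =
      Sfun (untwist μ α β) 1 1 i j l (α (β (β x))) (α (β (β y))) (α (β (β z))) := by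
  rw [Sfun_one]
  simp only [Sfun, koszulSign, biAssoc_eq_untwist hco hαm hβm, LinearEquiv.apply_symm_apply, hco]

theorem superJacobiator_eq_Sfun_sub (i j l : ZMod 2) (x y z : A) :
    superJacobiator μ α β i j l x y z = Sfun μ α β i j l x y z
      - (koszulSign K i j * koszulSign K j l * koszulSign K l i) • Sfun μ α β i l j x z y := by
  rw [superJacobiator_eq_untwist hco hβm, superJacobiator_one_eq_Sfun_sub,
    ← Sfun_eq_untwist hco hαm hβm, ← Sfun_eq_untwist hco hαm hβm]

theorem bihomLie_admissible_iff_S_symmetry_general (i j l : ZMod 2) (x y z : A) :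
    superJacobiator μ α β i j l x y z = 0 ↔
      Sfun μ α β i j l x y z =
        ((-1 : K) ^ (i.val * j.val + j.val * l.val + l.val * i.val)) •
          Sfun μ α β i l j x z y := by
  rw [superJacobiator_eq_Sfun_sub hco hαm hβm, sub_eq_zero, pow_add, pow_add]
  rfl

end Untwist

end BiHom

/-- **Proposition 3.5.** A BiHom-superalgebra with bijective `α`, `β` is BiHom-Lie
admissible (the supercommutator satisfies the BiHom-superJacobi identity on homogeneous
elements) if and only if `S(x, y, z) = (−1)^{|x||y|+|y||z|+|z||x|} S(x, z, y)` for all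
homogeneous `x`, `y`, `z`. -/
theorem bihomLie_admissible_iff_S_symmetry
    (K : Type*) [Field K] (V : Type*) [AddCommGroup V] [Module K V]
    (𝒜 : ZMod 2 → Submodule K V) [DirectSum.Decomposition 𝒜]
    (μ : V →ₗ[K] V →ₗ[K] V) (α β : V ≃ₗ[K] V)
    (hμ : ∀ (i j : ZMod 2), ∀ x ∈ 𝒜 i, ∀ y ∈ 𝒜 j, μ x y ∈ 𝒜 (i + j))
    (hαe : ∀ (i : ZMod 2), ∀ x ∈ 𝒜 i, α x ∈ 𝒜 i)
    (hβe : ∀ (i : ZMod 2), ∀ x ∈ 𝒜 i, β x ∈ 𝒜 i)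
    (hco : ∀ a : V, α (β a) = β (α a))
    (hαm : ∀ a b : V, α (μ a b) = μ (α a) (α b))
    (hβm : ∀ a b : V, β (μ a b) = μ (β a) (β b)) :
    (∀ (i j l : ZMod 2), ∀ x ∈ 𝒜 i, ∀ y ∈ 𝒜 j, ∀ z ∈ 𝒜 l,
      ((-1 : K) ^ (i.val * l.val)) •
          superComm μ α β i (j + l) (β (β x)) (superComm μ α β j l (β y) (α z))
        + ((-1 : K) ^ (j.val * i.val)) •
          superComm μ α β j (l + i) (β (β y)) (superComm μ α β l i (β z) (α x))
        + ((-1 : K) ^ (l.val * j.val)) •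
          superComm μ α β l (i + j) (β (β z)) (superComm μ α β i j (β x) (α y)) = 0)
    ↔ (∀ (i j l : ZMod 2), ∀ x ∈ 𝒜 i, ∀ y ∈ 𝒜 j, ∀ z ∈ 𝒜 l,
        Sfun μ α β i j l x y z
          = ((-1 : K) ^ (i.val * j.val + j.val * l.val + l.val * i.val)) •
              Sfun μ α β i l j x z y) :=
  forall₃_congr fun i j l => forall₂_congr fun x _ => forall₂_congr fun y _ =>
    forall₂_congr fun z _ => bihomLie_admissible_iff_S_symmetry_general hco hαm hβm i j l x y z
end
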